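/- Let F : S → G(S) be a Markov chain on a measurable space S and let A, B ⊆ S be measurable. If there exists a generalised Streett supermartingale for (F, A, B), then ℙ_{s₀}[Streett(A,B)] = 1 for every initial state s₀ ∈ S. -/

import Mathlib

open MeasureTheory ProbabilityTheory Set
open scoped ENNReal NNReal

variable {S : Type*} [MeasurableSpace S]

/-- Prepend an initial state to a trace. -/
def prep (s₀ : S) (ω : ℕ → S) : ℕ → S := fun n => Nat.rec s₀ (fun k _ => ω k) n

/-- The Streett condition for the pair `(A, B)`: either `A` is visited only
finitely often, or `B` is visited infinitely often. -/
def streett (A B : Set S) : Set (ℕ → S) :=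
  {ω | {i : ℕ | ω i ∈ A}.Finite ∨ {i : ℕ | ω i ∈ B}.Infinite}

/-- The next-time operator: `(𝕏 g)(s) = ∫ g dF(s)`. -/
noncomputable def nextTime (F : Kernel S S) (g : S → ℝ≥0∞) : S → ℝ≥0∞ :=
  fun s => ∫⁻ y, g y ∂(F s)

/-- A generalised Streett supermartingale (GSSM) for `(F, A, B)`: a measurable
`[0,∞)`-valued function `r` with `(𝕏 r)(x) ≤ r(x) − 1` on `A ∖ B` and
`(𝕏 r)(x) ≤ r(x)` outside `A ∪ B`. -/
def IsGSSM (F : Kernel S S) (A B : Set S) (r : S → ℝ≥0∞) : Prop :=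
  Measurable r ∧ (∀ x, r x ≠ ⊤) ∧
    (∀ x ∈ A \ B, nextTime F r x + 1 ≤ r x) ∧
    (∀ x ∉ A ∪ B, nextTime F r x ≤ r x)

theorem meas_prep : Measurable (fun p : S × (ℕ → S) => prep p.1 p.2) := by
  rw [measurable_pi_iff]
  intro n
  cases n with
  | zero => exact measurable_fst
  | succ k => exact (measurable_pi_apply k).comp measurable_snd

theorem meas_prep' (s : S) : Measurable (prep s) :=
  meas_prep.comp (measurable_const.prodMk measurable_id)

theorem meas_map (P : Kernel S (ℕ → S)) [IsMarkovKernel P] :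
    Measurable (fun s => (P s).map (prep s)) := by
  refine Measure.measurable_of_measurable_coe _ fun H hH => ?_
  have := Kernel.measurable_kernel_prodMk_left (κ := P) (meas_prep hH)
  convert this using 1
  funext s
  rw [Measure.map_apply (meas_prep' s) hH]
  rfl

theorem P_apply (F : Kernel S S) (P : Kernel S (ℕ → S)) [IsMarkovKernel P]
    (hP : ∀ s₀ : S, (P s₀ : Measure (ℕ → S)) = (F s₀).bind fun s₁ => (P s₁).map (prep s₁))
    {H : Set (ℕ → S)} (hH : MeasurableSet H) (s : S) :
    P s H = ∫⁻ t, P t (prep t ⁻¹' H) ∂(F s) := by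
  conv_lhs => rw [hP s]
  rw [Measure.bind_apply hH (meas_map P).aemeasurable]
  refine lintegral_congr fun t => ?_
  rw [Measure.map_apply (meas_prep' t) hH]

/-- `A` is visited at time `i` and `B` is not visited up to time `i`. -/
def evE (A B : Set S) (i : ℕ) : Set (ℕ → S) := {ω | ω i ∈ A ∧ ∀ j ≤ i, ω j ∉ B}

theorem meas_evE {A B : Set S} (hA : MeasurableSet A) (hB : MeasurableSet B) (i : ℕ) :
    MeasurableSet (evE A B i) := by
  have : evE A B i = (fun ω : ℕ → S => ω i) ⁻¹' A ∩
      ⋂ j, ⋂ (_ : j ≤ i), (fun ω : ℕ → S => ω j) ⁻¹' Bᶜ := by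
    ext ω; simp [evE]
  rw [this]
  exact (measurable_pi_apply i hA).inter
    (MeasurableSet.iInter fun j => MeasurableSet.iInter fun _ => measurable_pi_apply j hB.compl)

theorem prep_evE_succ {A B : Set S} {s : S} (hs : s ∉ B) (i : ℕ) :
    prep s ⁻¹' evE A B (i + 1) = evE A B i := by
  ext ω
  constructor
  · rintro ⟨h1, h2⟩
    exact ⟨h1, fun j hj => h2 (j + 1) (by omega)⟩
  · rintro ⟨h1, h2⟩
    refine ⟨h1, fun j hj => ?_⟩
    cases j with
    | zero => exact hs
    | succ k => exact h2 k (by omega)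

theorem sum_le (F : Kernel S S) (P : Kernel S (ℕ → S)) [IsMarkovKernel P]
    (hP : ∀ s₀ : S, (P s₀ : Measure (ℕ → S)) = (F s₀).bind fun s₁ => (P s₁).map (prep s₁))
    {A B : Set S} (hA : MeasurableSet A) (hB : MeasurableSet B)
    {r : S → ℝ≥0∞} (hr : IsGSSM F A B r) (n : ℕ) :
    ∀ s, ∑ i ∈ Finset.range n, P s (prep s ⁻¹' evE A B i) ≤ r s := by
  induction n with
  | zero => simp
  | succ n ih =>
    intro s
    by_cases hs : s ∈ B
    · have : ∀ i, prep s ⁻¹' evE A B i = ∅ := by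
        intro i
        ext ω
        simp only [mem_preimage, mem_empty_iff_false, iff_false]
        rintro ⟨_, h⟩
        exact h 0 (Nat.zero_le _) hs
      simp [this]
    · rw [Finset.sum_range_succ']
      have key : ∑ i ∈ Finset.range n, P s (prep s ⁻¹' evE A B (i + 1)) ≤ nextTime F r s := by
        simp_rw [prep_evE_succ hs]
        simp_rw [fun i => P_apply F P hP (meas_evE hA hB i) s]
        rw [← lintegral_finsetSum]
        · exact lintegral_mono ih
        · intro i _
          exact Kernel.measurable_kernel_prodMk_left (κ := P) (meas_prep (meas_evE hA hB i))
      by_cases hsA : s ∈ A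
      · exact (add_le_add key prob_le_one).trans (hr.2.2.1 s ⟨hsA, hs⟩)
      · have : prep s ⁻¹' evE A B 0 = ∅ := by
          ext ω
          simp only [mem_preimage, mem_empty_iff_false, iff_false]
          rintro ⟨h, _⟩
          exact hsA h
        rw [this, measure_empty, add_zero]
        exact key.trans (hr.2.2.2 s (by simp [hs, hsA]))

/-- If a generalised Streett supermartingale exists for `(F, A, B)`, then the
Streett condition for `(A, B)` holds almost surely from every initial state. -/
theorem GSSM_implies_streett_as
    (F : Kernel S S) [IsMarkovKernel F]
    (P : Kernel S (ℕ → S)) [IsMarkovKernel P]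
    (hP : ∀ s₀ : S, (P s₀ : Measure (ℕ → S)) = (F s₀).bind fun s₁ => (P s₁).map (prep s₁))
    (A B : Set S) (hA : MeasurableSet A) (hB : MeasurableSet B)
    (hGSSM : ∃ r : S → ℝ≥0∞, IsGSSM F A B r) :
    ∀ s₀ : S, P s₀ (streett A B) = 1 := by
  intro s₀
  obtain ⟨r, hr⟩ := hGSSM
  have h0 : ∀ s, P s (prep s ⁻¹' {ω | ∃ᶠ i in Filter.atTop, ω ∈ evE A B i}) = 0 := by
    intro s
    refine measure_setOfPred_frequently_eq_zero (p := fun i ω => prep s ω ∈ evE A B i) ?_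
    refine ne_top_of_le_ne_top (hr.2.1 s) ?_
    exact ENNReal.tsum_le_of_sum_range_le fun n => sum_le F P hP hA hB hr n s
  have hG : MeasurableSet {ω : ℕ → S | ∃ᶠ i in Filter.atTop, ω ∈ evE A B i} := by
    have : {ω : ℕ → S | ∃ᶠ i in Filter.atTop, ω ∈ evE A B i} =
        ⋂ a : ℕ, ⋃ b : ℕ, ⋃ (_ : b ≥ a), evE A B b := by
      ext ω
      simp [Filter.frequently_atTop]
    rw [this]
    exact MeasurableSet.iInter fun a => MeasurableSet.iUnion fun b =>
      MeasurableSet.iUnion fun _ => meas_evE hA hB b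
  have hn : ∀ n : ℕ, ∀ s, P s {ω : ℕ → S | (fun k => ω (k + n)) ∈
      {ω : ℕ → S | ∃ᶠ i in Filter.atTop, ω ∈ evE A B i}} = 0 := by
    intro n
    induction n with
    | zero =>
      intro s
      refine (P_apply F P hP hG s).trans ?_
      refine (lintegral_congr fun t => h0 t).trans ?_
      simp
    | succ n ih =>
      intro s
      have hm : Measurable (fun ω : ℕ → S => fun k => ω (k + (n + 1))) :=
        measurable_pi_iff.2 fun k => measurable_pi_apply _
      refine (P_apply F P hP (hm hG) s).trans ?_
      refine (lintegral_congr fun t => ih t).trans ?_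
      simp
  have hae : ∀ᵐ ω ∂(P s₀), ω ∈ streett A B := by
    have := ae_all_iff.2 fun n => (measure_eq_zero_iff_ae_notMem.1 (hn n s₀))
    filter_upwards [this] with ω hω
    by_contra hbad
    simp only [streett, mem_setOf_eq, not_or, Set.not_infinite] at hbad
    obtain ⟨hAinf, hBfin⟩ := hbad
    obtain ⟨m, hm⟩ := hBfin.bddAbove
    refine hω (m + 1) ?_
    change ∃ᶠ i in Filter.atTop, (fun k => ω (k + (m + 1))) ∈ evE A B i
    rw [Filter.frequently_atTop]
    intro a
    obtain ⟨b, hb, hab⟩ := Set.Infinite.exists_gt hAinf (a + m + 1)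
    refine ⟨b - (m + 1), by omega, ?_, fun j _ hj => ?_⟩
    · have : b - (m + 1) + (m + 1) = b := by omega
      simpa [this] using hb
    · have := hm hj
      omega
  have h1 : P s₀ (streett A B) = P s₀ univ :=
    measure_congr (Filter.eventuallyEq_univ.2 hae)
  rw [h1, measure_univ]
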